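/- Let G be a finite group, M ⊴ G, ψ ∈ Irr(M), and suppose Θ is a character of G extending a multiplicity-free character θ of M (i.e., Θ|_M = θ and θ is a sum of distinct irreducible characters of M, each with multiplicity one). If ψ is a constituent of θ, then there is a unique irreducible constituent ψ̂ of Θ with ⟨ψ̂|_M, ψ⟩ ≥ 1, and moreover ψ̂|_M has ψ as a constituent with multiplicity one whenever G/M is cyclic and ψ is G-invariant; in that case ψ̂ extends ψ. -/

import Mathlib

open CategoryTheory

/-- The usual inner product of class functions of the subgroup `K`,
for functions given on the ambient group `G`. -/
noncomputable def charInner {G : Type} [Group G] (K : Subgroup G) (α β : G → ℂ) : ℂ :=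
  (Nat.card K : ℂ)⁻¹ * ∑ᶠ g : K, α g * (starRingEnd ℂ) (β g)

/-- `χ` (a function on the ambient group) restricts to a complex character
of the subgroup `K`. -/
def IsCharOn {G : Type} [Group G] (K : Subgroup G) (χ : G → ℂ) : Prop :=
  ∃ V : FDRep ℂ K, ∀ k : K, χ k = V.character k

/-- `χ` (a function on the ambient group) restricts to an irreducible complex
character of the subgroup `K`. -/
def IsIrredCharOn {G : Type} [Group G] (K : Subgroup G) (χ : G → ℂ) : Prop :=
  ∃ V : FDRep ℂ K, Simple V ∧ ∀ k : K, χ k = V.character k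

/-!
`Hom_M(ψ, Θ)` is a line, spanned by some `f`. If the representation `V` of `Θ` is a `G`-stable
direct sum `P ⊕ Q`, the projection onto `P` multiplies `f` by a scalar, so the image of `f` lies in
`P` or in `Q`. By Maschke, a smallest `G`-stable subspace containing the image of `f` is therefore
irreducible, which gives existence. Every irreducible subspace of `V` whose restriction contains `ψ`
contains the image of `f`, and distinct irreducible subspaces meet trivially, which gives
uniqueness. The restriction of such a constituent `X` contains `ψ` exactly once; if `ψ` is
`G`-invariant, an `M`-embedding `j` of `ψ` in `X`, translated by `g ∈ G` and twisted back, is a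
multiple of `j`, so the image of `j` is `G`-stable and hence all of `X`.
-/

section Trace

variable {K V : Type*} [Field K] [AddCommGroup V] [Module K V] [FiniteDimensional K V]

theorem trace_eq_sum_mul_finrank_eigenspace {f g : Module.End K V}
    (hf : ⨆ μ, f.eigenspace μ = ⊤) {c : K → K}
    (hg : ∀ μ, ∀ x ∈ f.eigenspace μ, g x = c μ • x) :
    LinearMap.trace K V g =
      ∑ μ ∈ (WellFoundedGT.finite_ne_bot_of_iSupIndep f.eigenspaces_iSupIndep).toFinset,
        c μ * Module.finrank K (f.eigenspace μ) := by
  classical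
  have hmaps (μ : K) : Set.MapsTo g (f.eigenspace μ) (f.eigenspace μ) := fun x hx ↦ by
    rw [hg μ x hx]
    exact Submodule.smul_mem _ _ hx
  have hdecomp :=
    DirectSum.isInternal_submodule_of_iSupIndep_of_iSup_eq_top f.eigenspaces_iSupIndep hf
  have hfin := WellFoundedGT.finite_ne_bot_of_iSupIndep f.eigenspaces_iSupIndep
  rw [LinearMap.trace_eq_sum_trace_restrict' hdecomp hfin hmaps]
  refine Finset.sum_congr rfl fun μ _ ↦ ?_
  have hscalar : g.restrict (hmaps μ) = c μ • LinearMap.id :=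
    LinearMap.ext fun x ↦ Subtype.ext (hg μ x x.2)
  rw [hscalar, map_smul, LinearMap.trace_id, smul_eq_mul]

theorem iSup_eigenspace_eq_top_of_pow_eq_one [IsAlgClosed K] {f : Module.End K V} {n : ℕ}
    (hn : (n : K) ≠ 0) (hf : f ^ n = 1) : ⨆ μ, f.eigenspace μ = ⊤ := by
  have hsep : (Polynomial.X ^ n - Polynomial.C (1 : K)).Separable :=
    Polynomial.separable_X_pow_sub_C 1 hn one_ne_zero
  have hss : f.IsSemisimple :=
    Module.End.isSemisimple_of_squarefree_aeval_eq_zero hsep.squarefree (by simp [hf])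
  exact hss.iSup_eigenspace_eq_top

end Trace

section Complex

variable {V : Type*} [AddCommGroup V] [Module ℂ V] [FiniteDimensional ℂ V]

theorem conj_trace_eq_trace_of_pow_eq_one {f g : Module.End ℂ V} {n : ℕ} (hn : n ≠ 0)
    (hf : f ^ n = 1) (hgf : g * f = 1) :
    starRingEnd ℂ (LinearMap.trace ℂ V f) = LinearMap.trace ℂ V g := by
  have htop := iSup_eigenspace_eq_top_of_pow_eq_one (Nat.cast_ne_zero.2 hn) hf
  have hg (μ : ℂ) (x : V) (hx : x ∈ f.eigenspace μ) : g x = starRingEnd ℂ μ • x := by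
    obtain rfl | hx0 := eq_or_ne x 0
    · simp
    have hμ : μ ^ n = 1 := by
      have hpow := Module.End.HasEigenvector.pow_apply ⟨hx, hx0⟩ n
      rw [hf, Module.End.one_apply] at hpow
      exact smul_left_injective ℂ hx0 (by simpa using hpow.symm)
    have hμ0 : μ ≠ 0 := fun h ↦ by simp [h, hn] at hμ
    rw [← Complex.inv_eq_conj (Complex.norm_eq_one_of_pow_eq_one hμ hn), eq_inv_smul_iff₀ hμ0,
      ← map_smul, ← Module.End.mem_eigenspace_iff.1 hx, ← Module.End.mul_apply, hgf,
      Module.End.one_apply]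
  rw [trace_eq_sum_mul_finrank_eigenspace htop hg, trace_eq_sum_mul_finrank_eigenspace htop
    (c := id) fun μ x hx ↦ Module.End.mem_eigenspace_iff.1 hx, map_sum]
  exact Finset.sum_congr rfl fun μ _ ↦ by simp

theorem conj_character {K : Type*} [Group K] [Finite K] (ρ : Representation ℂ K V) (g : K) :
    starRingEnd ℂ (ρ.character g) = ρ.character g⁻¹ :=
  conj_trace_eq_trace_of_pow_eq_one Nat.card_pos.ne' (by rw [← map_pow, pow_card_eq_one', map_one])
    (by rw [← map_mul, inv_mul_cancel, map_one])

end Complex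

section CharInner

theorem charInner_congr {G : Type} [Group G] {K : Subgroup G} {α α' β : G → ℂ}
    (h : ∀ g ∈ K, α g = α' g) : charInner K α β = charInner K α' β := by
  simp only [charInner, h _ (SetLike.coe_mem _)]

open Representation

variable {G : Type} [Group G] [Finite G] {K : Subgroup G} {α β : G → ℂ}
  {V W : Type*} [AddCommGroup V] [Module ℂ V] [FiniteDimensional ℂ V]
  [AddCommGroup W] [Module ℂ W] [FiniteDimensional ℂ W]
  {ρ : Representation ℂ K V} {σ : Representation ℂ K W}

theorem charInner_eq_finrank_intertwiningMap
    (hα : ∀ k : K, α k = ρ.character k) (hβ : ∀ k : K, β k = σ.character k) :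
    charInner K α β = Module.finrank ℂ (σ.IntertwiningMap ρ) := by
  have := Fintype.ofFinite K
  have := invertibleOfNonzero (NeZero.ne (Nat.card K : ℂ))
  simp only [← card_inv_mul_sum_char_mul_char_eq_finrank, charInner, finsum_eq_sum_of_fintype, hα,
    hβ, conj_character]

theorem charInner_eq_one_iff
    (hα : ∀ k : K, α k = ρ.character k) (hβ : ∀ k : K, β k = σ.character k) :
    charInner K α β = 1 ↔ Module.finrank ℂ (σ.IntertwiningMap ρ) = 1 := by
  rw [charInner_eq_finrank_intertwiningMap hα hβ, Nat.cast_eq_one]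

theorem charInner_ne_zero_iff
    (hα : ∀ k : K, α k = ρ.character k) (hβ : ∀ k : K, β k = σ.character k) :
    charInner K α β ≠ 0 ↔ ∃ f : σ.IntertwiningMap ρ, f ≠ 0 := by
  rw [charInner_eq_finrank_intertwiningMap hα hβ, Nat.cast_ne_zero, ← Nat.pos_iff_ne_zero,
    Module.finrank_pos_iff, nontrivial_iff_exists_ne 0]

end CharInner

section Subrepresentation

open Representation

variable {k G H V W X : Type*} [Field k] [Group G] [Group H]
  [AddCommGroup V] [Module k V] [AddCommGroup W] [Module k W] [AddCommGroup X] [Module k X]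
  {ρ : Representation k G V} {σ : Representation k H W} {τ : Representation k G X}

/-- The inclusion of a subrepresentation, as an intertwining map. -/
def subrepresentationSubtype (U : Subrepresentation ρ) : U.toRepresentation.IntertwiningMap ρ :=
  ⟨U.toSubmodule.subtype, fun _ ↦ rfl⟩

/-- The restriction of an intertwining map of representations of `G` along `ι : H →* G`. -/
def restrictIntertwiningMap (ι : H →* G) (i : τ.IntertwiningMap ρ) :
    IntertwiningMap (τ.comp ι) (ρ.comp ι) :=
  ⟨i.toLinearMap, fun h ↦ i.isIntertwining' (ι h)⟩

/-- An `H`-equivariant map to a representation of `G` with values in the subrepresentation `U`,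
viewed as a map to `U`. -/
def codRestrictIntertwiningMap {ι : H →* G} (f : σ.IntertwiningMap (ρ.comp ι))
    (U : Subrepresentation ρ) (hf : ∀ w, f w ∈ U) :
    σ.IntertwiningMap (U.toRepresentation.comp ι) :=
  ⟨f.toLinearMap.codRestrict U.toSubmodule hf,
    fun h ↦ LinearMap.ext fun w ↦ Subtype.ext (f.isIntertwining _ _ h w)⟩

theorem isCompl_toSubmodule {P Q : Subrepresentation ρ} (h : IsCompl P Q) :
    IsCompl P.toSubmodule Q.toSubmodule where
  disjoint := disjoint_iff.2 <| by
    rw [← Subrepresentation.toSubmodule_inf, h.inf_eq_bot]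
    rfl
  codisjoint := codisjoint_iff.2 <| by
    rw [← Subrepresentation.toSubmodule_sup, h.sup_eq_top]
    rfl

/-- The projection onto `P` along a complementary subrepresentation `Q`, as an intertwining map. -/
noncomputable def subrepresentationProjection {P Q : Subrepresentation ρ} (h : IsCompl P Q) :
    ρ.IntertwiningMap ρ where
  toLinearMap := P.toSubmodule.projection Q.toSubmodule (isCompl_toSubmodule h)
  isIntertwining' g := by
    refine ((LinearMap.IsIdempotentElem.commute_iff
      (Submodule.isIdempotentElem_projection _)).2 ⟨?_, ?_⟩).eq
    · rw [Submodule.range_projection]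
      exact fun v hv ↦ P.apply_mem_toSubmodule g hv
    · rw [Submodule.ker_projection]
      exact fun v hv ↦ Q.apply_mem_toSubmodule g hv

theorem forall_apply_mem_or_of_isCompl {ι : H →* G} {f : σ.IntertwiningMap (ρ.comp ι)}
    (hf : ∀ h : σ.IntertwiningMap (ρ.comp ι), ∃ a : k, a • f = h)
    {P Q : Subrepresentation ρ} (hPQ : IsCompl P Q) : (∀ w, f w ∈ P) ∨ ∀ w, f w ∈ Q := by
  have hPQ' := isCompl_toSubmodule hPQ
  obtain ⟨a, ha⟩ := hf ((restrictIntertwiningMap ι (subrepresentationProjection hPQ)).comp f)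
  have hproj (w : W) : a • f w = P.toSubmodule.projection Q.toSubmodule hPQ' (f w) :=
    DFunLike.congr_fun ha w
  obtain rfl | ha0 := eq_or_ne a 0
  · right
    intro w
    exact (Submodule.projection_apply_eq_zero_iff hPQ').1 (by rw [← hproj, zero_smul])
  · left
    intro w
    refine (P.toSubmodule.smul_mem_iff ha0).1 ?_
    rw [hproj]
    exact Submodule.projection_apply_mem hPQ' (f w)

theorem exists_isAtom_forall_apply_mem [FiniteDimensional k V] [IsSemisimpleRepresentation ρ]
    {ι : H →* G} {f : σ.IntertwiningMap (ρ.comp ι)} (hf0 : f ≠ 0)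
    (hf : ∀ h : σ.IntertwiningMap (ρ.comp ι), ∃ a : k, a • f = h) :
    ∃ U : Subrepresentation ρ, IsAtom U ∧ ∀ w, f w ∈ U := by
  have hwf : WellFoundedLT (Subrepresentation ρ) :=
    StrictMono.wellFoundedLT (f := Subrepresentation.toSubmodule) fun _ _ h ↦ h
  obtain ⟨U, hfU, hmin⟩ :=
    hwf.wf.has_min {U : Subrepresentation ρ | ∀ w, f w ∈ U} ⟨⊤, fun _ ↦ trivial⟩
  refine ⟨U, ⟨?_, fun Q hQU ↦ ?_⟩, hfU⟩
  · rintro rfl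
    exact hf0 (DFunLike.ext _ _ hfU)
  · obtain ⟨C, hQC⟩ := exists_isCompl Q
    have hfC : ∀ w, f w ∈ C :=
      (forall_apply_mem_or_of_isCompl hf hQC).resolve_left fun hfQ ↦ hmin Q hfQ hQU
    have hUC : U ≤ C := inf_eq_left.1 <| eq_of_le_of_not_lt inf_le_left <|
      hmin (U ⊓ C) fun w ↦ ⟨hfU w, hfC w⟩
    exact hQC.disjoint.eq_bot_of_le (hQU.le.trans hUC)

/-- Subrepresentations of the source of an injective intertwining map correspond to
subrepresentations of the target contained in its range. -/
def subrepresentationOrderIsoIicRange (i : τ.IntertwiningMap ρ) (hi : Function.Injective i) :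
    Subrepresentation τ ≃o Set.Iic i.range where
  toFun P := ⟨(i.comp (subrepresentationSubtype P)).range, by
    rintro _ ⟨x, rfl⟩
    exact ⟨x, rfl⟩⟩
  invFun Q := ⟨Q.1.toSubmodule.comap i.toLinearMap, fun g x hx ↦ by
    rw [Submodule.mem_comap, i.toLinearMap_apply, i.isIntertwining]
    exact Q.1.apply_mem_toSubmodule g hx⟩
  left_inv P := by
    ext x
    constructor
    · rintro ⟨y, hy⟩
      exact hi hy ▸ y.2
    · exact fun hx ↦ ⟨⟨x, hx⟩, rfl⟩
  right_inv Q := by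
    ext v
    constructor
    · rintro ⟨y, rfl⟩
      exact y.2
    · intro hv
      obtain ⟨x, rfl⟩ := Q.2 hv
      exact ⟨⟨x, hv⟩, rfl⟩
  map_rel_iff' {P P'} := by
    constructor
    · intro h x hx
      obtain ⟨y, hy⟩ := h ⟨⟨x, hx⟩, rfl⟩
      have hyx : (y : X) = x := hi hy
      exact hyx ▸ y.2
    · rintro h _ ⟨x, rfl⟩
      exact ⟨⟨x, h x.2⟩, rfl⟩

theorem isIrreducible_iff_isAtom_range {i : τ.IntertwiningMap ρ} (hi : Function.Injective i) :
    τ.IsIrreducible ↔ IsAtom i.range :=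
  (OrderIso.isSimpleOrder_iff (subrepresentationOrderIsoIicRange i hi)).trans
    Set.isSimpleOrder_Iic_iff_isAtom

theorem isIrreducible_toRepresentation_iff_isAtom {U : Subrepresentation ρ} :
    U.toRepresentation.IsIrreducible ↔ IsAtom U := by
  have hrange : (subrepresentationSubtype U).range = U :=
    Subrepresentation.toSubmodule_injective U.toSubmodule.range_subtype
  rw [isIrreducible_iff_isAtom_range (i := subrepresentationSubtype U) Subtype.val_injective,
    hrange]

/-- An injective intertwining map identifies its source with its range. -/
noncomputable def equivRangeToRepresentation (i : τ.IntertwiningMap ρ)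
    (hi : Function.Injective i) : τ.Equiv i.range.toRepresentation :=
  IntertwiningMap.ofBijective
    (codRestrictIntertwiningMap (ι := MonoidHom.id G) i i.range fun x ↦ ⟨x, rfl⟩)
    ⟨fun _ _ h ↦ hi (congrArg Subtype.val h), fun ⟨_, x, hx⟩ ↦ ⟨x, Subtype.ext hx⟩⟩

theorem nonempty_equiv_of_finrank_intertwiningMap_eq_one {X₁ X₂ : Type*}
    [AddCommGroup X₁] [Module k X₁] [AddCommGroup X₂] [Module k X₂]
    {τ₁ : Representation k G X₁} {τ₂ : Representation k G X₂} [τ₁.IsIrreducible]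
    [τ₂.IsIrreducible] {ι : H →* G}
    (hrank : Module.finrank k (σ.IntertwiningMap (ρ.comp ι)) = 1)
    {i₁ : τ₁.IntertwiningMap ρ} (hi₁ : i₁ ≠ 0) {j₁ : σ.IntertwiningMap (τ₁.comp ι)} (hj₁ : j₁ ≠ 0)
    {i₂ : τ₂.IntertwiningMap ρ} (hi₂ : i₂ ≠ 0) {j₂ : σ.IntertwiningMap (τ₂.comp ι)} (hj₂ : j₂ ≠ 0) :
    Nonempty (τ₁.Equiv τ₂) := by
  have hinj₁ := (IsIrreducible.injective_or_eq_zero i₁).resolve_right hi₁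
  have hinj₂ := (IsIrreducible.injective_or_eq_zero i₂).resolve_right hi₂
  obtain ⟨w, hw⟩ : ∃ w, j₁ w ≠ 0 := DFunLike.ne_iff.1 hj₁
  have hv : i₁ (j₁ w) ≠ 0 := (map_ne_zero_iff i₁ hinj₁).2 hw
  have hcomp₂ : (restrictIntertwiningMap ι i₂).comp j₂ ≠ 0 := by
    obtain ⟨u, hu⟩ : ∃ u, j₂ u ≠ 0 := DFunLike.ne_iff.1 hj₂
    exact DFunLike.ne_iff.2 ⟨u, (map_ne_zero_iff i₂ hinj₂).2 hu⟩
  obtain ⟨a, ha⟩ := (finrank_eq_one_iff_of_nonzero' _ hcomp₂).1 hrank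
    ((restrictIntertwiningMap ι i₁).comp j₁)
  have hmem : i₁ (j₁ w) ∈ i₂.range :=
    ⟨a • j₂ w, (map_smul i₂ a (j₂ w)).trans (DFunLike.congr_fun ha w)⟩
  have hrange : i₁.range = i₂.range := by
    by_contra hne
    have hatom₁ : IsAtom i₁.range := (isIrreducible_iff_isAtom_range hinj₁).1 ‹_›
    have hatom₂ : IsAtom i₂.range := (isIrreducible_iff_isAtom_range hinj₂).1 ‹_›
    exact hv ((hatom₁.disjoint_of_ne hatom₂ hne).le_bot ⟨⟨j₁ w, rfl⟩, hmem⟩)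
  have e := equivRangeToRepresentation i₁ hinj₁
  rw [hrange] at e
  exact ⟨e.trans (equivRangeToRepresentation i₂ hinj₂).symm⟩

theorem finrank_intertwiningMap_le_of_injective [FiniteDimensional k V] [FiniteDimensional k W]
    {τ : Representation k G X} {σ : Representation k G W}
    {i : τ.IntertwiningMap ρ} (hi : Function.Injective i) :
    Module.finrank k (σ.IntertwiningMap τ) ≤ Module.finrank k (σ.IntertwiningMap ρ) :=
  LinearMap.finrank_le_finrank_of_injective (f := IntertwiningMap.llcomp σ τ ρ i) fun _ _ h ↦
    DFunLike.ext _ _ fun w ↦ hi (DFunLike.congr_fun h w)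

end Subrepresentation

section Irreducible

universe u

open Representation

variable {k : Type*} [Field k] [IsAlgClosed k]

theorem isIrreducible_iff_finrank_intertwiningMap_self_eq_one {G V : Type*} [Group G]
    [AddCommGroup V] [Module k V] [FiniteDimensional k V] {ρ : Representation k G V}
    [IsSemisimpleRepresentation ρ] :
    ρ.IsIrreducible ↔ Module.finrank k (ρ.IntertwiningMap ρ) = 1 := by
  refine ⟨fun _ ↦ IsIrreducible.finrank_intertwiningMap_self ρ, fun h ↦ ?_⟩
  have : Nontrivial (ρ.IntertwiningMap ρ) := Module.nontrivial_of_finrank_eq_succ h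
  have hid : (1 : ρ.IntertwiningMap ρ) ≠ 0 := one_ne_zero
  obtain ⟨U, hU, hmem⟩ := exists_isAtom_forall_apply_mem (ι := MonoidHom.id G) hid
    ((finrank_eq_one_iff_of_nonzero' _ hid).1 h)
  have htop : U = ⊤ := top_le_iff.1 fun v _ ↦ hmem v
  exact isSimpleOrder_iff_isAtom_top.2 (htop ▸ hU)

theorem simple_iff_isIrreducible {k G : Type u} [Field k] [IsAlgClosed k] [CharZero k] [Group G]
    [Finite G] (V : FDRep k G) : Simple V ↔ IsIrreducible V.ρ := by
  have := Fintype.ofFinite G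
  have := invertibleOfNonzero (NeZero.ne (Nat.card G : k))
  rw [isIrreducible_iff_finrank_intertwiningMap_self_eq_one, FDRep.simple_iff_char_is_norm_one,
    ← Nat.cast_eq_one (R := k), ← card_inv_mul_sum_char_mul_char_eq_finrank,
    inv_mul_eq_one₀ (NeZero.ne _), eq_comm]
  rfl

theorem nonempty_equiv_of_character_eq [CharZero k] {G V W : Type*} [Group G] [Finite G]
    [AddCommGroup V] [Module k V] [FiniteDimensional k V]
    [AddCommGroup W] [Module k W] [FiniteDimensional k W]
    {ρ : Representation k G V} {σ : Representation k G W} [σ.IsIrreducible]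
    (h : ρ.character = σ.character) : Nonempty (σ.Equiv ρ) := by
  have := Fintype.ofFinite G
  have := invertibleOfNonzero (NeZero.ne (Nat.card G : k))
  have hrank : Module.finrank k (σ.IntertwiningMap ρ) = 1 := by
    rw [← IsIrreducible.finrank_intertwiningMap_self σ, ← Nat.cast_inj (R := k),
      ← card_inv_mul_sum_char_mul_char_eq_finrank, ← card_inv_mul_sum_char_mul_char_eq_finrank, h]
  have hdim : Module.finrank k W = Module.finrank k V := by
    rw [← Nat.cast_inj (R := k), ← char_one σ, ← char_one ρ, h]
  have := Module.nontrivial_of_finrank_eq_succ hrank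
  obtain ⟨f, hf⟩ := exists_ne (0 : σ.IntertwiningMap ρ)
  have hinj : Function.Injective f.toLinearMap :=
    (IsIrreducible.injective_or_eq_zero f).resolve_right hf
  exact ⟨f.ofBijective
    ⟨hinj, (LinearMap.injective_iff_surjective_of_finrank_eq_finrank hdim).1 hinj⟩⟩

end Irreducible

section Extension

open Representation

variable {k G H V W : Type*} [Field k] [Group G] [Group H]
  [AddCommGroup V] [Module k V] [AddCommGroup W] [Module k W]
  {ρ : Representation k G V} {σ : Representation k H W}
  {ι : H →* G}

theorem apply_mem_range_of_equiv_comp {c : H →* H} {g : G}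
    (hc : ∀ h, ι (c h) = g⁻¹ * ι h * g) (e : σ.Equiv (σ.comp c))
    {f : σ.IntertwiningMap (ρ.comp ι)}
    (hf : ∀ h : σ.IntertwiningMap (ρ.comp ι), ∃ a : k, a • f = h) (w : W) :
    ρ g (f w) ∈ f.toLinearMap.range := by
  let twist : IntertwiningMap (σ.comp c) (ρ.comp ι) :=
    ⟨ρ g ∘ₗ f.toLinearMap, fun h ↦ LinearMap.ext fun u ↦ by
      have hfu : f (σ (c h) u) = ρ (ι (c h)) (f u) := f.isIntertwining _ _ (c h) u
      change ρ g (f (σ (c h) u)) = ρ (ι h) (ρ g (f u))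
      rw [hfu, ← Module.End.mul_apply, ← Module.End.mul_apply, ← map_mul, ← map_mul, hc]
      group⟩
  obtain ⟨a, ha⟩ := hf (twist.comp e.toIntertwiningMap)
  obtain ⟨u, rfl⟩ := e.surjective w
  exact ⟨a • u, (map_smul f a u).trans (DFunLike.congr_fun ha u)⟩

theorem nonempty_equiv_comp_of_finrank_intertwiningMap_eq_one [ρ.IsIrreducible] [σ.IsIrreducible]
    {c : G → H →* H} (hc : ∀ g h, ι (c g h) = g⁻¹ * ι h * g)
    (hσ : ∀ g, Nonempty (σ.Equiv (σ.comp (c g))))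
    (hrank : Module.finrank k (σ.IntertwiningMap (ρ.comp ι)) = 1) :
    Nonempty (σ.Equiv (ρ.comp ι)) := by
  have := Module.nontrivial_of_finrank_eq_succ hrank
  obtain ⟨f, hf0⟩ := exists_ne (0 : σ.IntertwiningMap (ρ.comp ι))
  have hspan := (finrank_eq_one_iff_of_nonzero' f hf0).1 hrank
  let U : Subrepresentation ρ := ⟨f.toLinearMap.range, by
    rintro g _ ⟨w, rfl⟩
    obtain ⟨e⟩ := hσ g
    exact apply_mem_range_of_equiv_comp (hc g) e hspan w⟩
  have hU : U ≠ ⊥ := fun h ↦ hf0 (DFunLike.ext _ _ fun w ↦ h.le ⟨w, rfl⟩)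
  have hU_top : U = ⊤ := (IsSimpleOrder.eq_bot_or_eq_top U).resolve_left hU
  exact ⟨f.ofBijective ⟨(IsIrreducible.injective_or_eq_zero f).resolve_right hf0,
    fun v ↦ hU_top.ge trivial⟩⟩

end Extension

section Constituents

open Representation

variable {G : Type} [Group G] {M : Subgroup G} {Θ χ χ₁ χ₂ ψ : G → ℂ}

theorem character_comp_inclusion_eq {V : FDRep ℂ (⊤ : Subgroup G)}
    (h : ∀ g : (⊤ : Subgroup G), χ g = V.character g) (m : M) :
    χ m = Representation.character (V.ρ.comp (Subgroup.inclusion le_top)) m :=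
  h (Subgroup.inclusion le_top m)

variable [Finite G]

theorem charInner_eq_one_of_constituent (hΘ : IsCharOn ⊤ Θ) (hχ : IsIrredCharOn ⊤ χ)
    (hψ : IsCharOn M ψ) (hΘψ : charInner M Θ ψ = 1) (hΘχ : charInner ⊤ Θ χ ≠ 0)
    (hχψ : charInner M χ ψ ≠ 0) : charInner M χ ψ = 1 := by
  obtain ⟨V, hV⟩ := hΘ
  obtain ⟨X, hX, hXχ⟩ := hχ
  obtain ⟨W, hW⟩ := hψ
  have := (simple_iff_isIrreducible X).1 hX
  let ι : M →* (⊤ : Subgroup G) := Subgroup.inclusion le_top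
  obtain ⟨i, hi⟩ := (charInner_ne_zero_iff (ρ := V.ρ) (σ := X.ρ) hV hXχ).1 hΘχ
  have hinj := (IsIrreducible.injective_or_eq_zero i).resolve_right hi
  have hle := finrank_intertwiningMap_le_of_injective (σ := W.ρ)
    (i := restrictIntertwiningMap ι i) hinj
  rw [(charInner_eq_one_iff (character_comp_inclusion_eq hV) hW).1 hΘψ] at hle
  rw [charInner_eq_finrank_intertwiningMap (character_comp_inclusion_eq hXχ) hW,
    Nat.cast_ne_zero] at hχψ
  exact (charInner_eq_one_iff (character_comp_inclusion_eq hXχ) hW).2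
    (le_antisymm hle (Nat.one_le_iff_ne_zero.2 hχψ))

theorem exists_constituent_of_charInner_eq_one (hΘ : IsCharOn ⊤ Θ) (hψ : IsCharOn M ψ)
    (hΘψ : charInner M Θ ψ = 1) :
    ∃ χ : G → ℂ, IsIrredCharOn ⊤ χ ∧ charInner ⊤ Θ χ ≠ 0 ∧ charInner M χ ψ ≠ 0 := by
  obtain ⟨V, hV⟩ := hΘ
  obtain ⟨W, hW⟩ := hψ
  let ι : M →* (⊤ : Subgroup G) := Subgroup.inclusion le_top
  have hrank : Module.finrank ℂ (IntertwiningMap W.ρ (V.ρ.comp ι)) = 1 :=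
    (charInner_eq_one_iff (character_comp_inclusion_eq hV) hW).1 hΘψ
  have := Module.nontrivial_of_finrank_eq_succ hrank
  obtain ⟨f, hf⟩ := exists_ne (0 : IntertwiningMap W.ρ (V.ρ.comp ι))
  obtain ⟨w, hw⟩ : ∃ w, f w ≠ 0 := DFunLike.ne_iff.1 hf
  obtain ⟨U, hU, hfU⟩ :=
    exists_isAtom_forall_apply_mem hf ((finrank_eq_one_iff_of_nonzero' f hf).1 hrank)
  let χ (g : G) : ℂ := U.toRepresentation.character ⟨g, trivial⟩
  have hχ : IsIrredCharOn ⊤ χ := ⟨FDRep.of U.toRepresentation,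
    (simple_iff_isIrreducible _).2 (isIrreducible_toRepresentation_iff_isAtom.2 hU), fun _ ↦ rfl⟩
  refine ⟨χ, hχ, ?_, ?_⟩
  · exact (charInner_ne_zero_iff (σ := U.toRepresentation) hV fun _ ↦ rfl).2
      ⟨subrepresentationSubtype U, DFunLike.ne_iff.2 ⟨⟨f w, hfU w⟩, hw⟩⟩
  · exact (charInner_ne_zero_iff (ρ := U.toRepresentation.comp ι) (fun _ ↦ rfl) hW).2
      ⟨codRestrictIntertwiningMap f U hfU,
        DFunLike.ne_iff.2 ⟨w, fun h ↦ hw (congrArg Subtype.val h)⟩⟩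

theorem constituent_unique_of_charInner_eq_one (hΘ : IsCharOn ⊤ Θ) (hψ : IsCharOn M ψ)
    (hΘψ : charInner M Θ ψ = 1)
    (hχ₁ : IsIrredCharOn ⊤ χ₁) (hΘχ₁ : charInner ⊤ Θ χ₁ ≠ 0) (hχ₁ψ : charInner M χ₁ ψ ≠ 0)
    (hχ₂ : IsIrredCharOn ⊤ χ₂) (hΘχ₂ : charInner ⊤ Θ χ₂ ≠ 0) (hχ₂ψ : charInner M χ₂ ψ ≠ 0) :
    χ₁ = χ₂ := by
  obtain ⟨V, hV⟩ := hΘ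
  obtain ⟨W, hW⟩ := hψ
  obtain ⟨X₁, hX₁, hX₁χ⟩ := hχ₁
  obtain ⟨X₂, hX₂, hX₂χ⟩ := hχ₂
  have := (simple_iff_isIrreducible X₁).1 hX₁
  have := (simple_iff_isIrreducible X₂).1 hX₂
  obtain ⟨i₁, hi₁⟩ := (charInner_ne_zero_iff (ρ := V.ρ) (σ := X₁.ρ) hV hX₁χ).1 hΘχ₁
  obtain ⟨i₂, hi₂⟩ := (charInner_ne_zero_iff (ρ := V.ρ) (σ := X₂.ρ) hV hX₂χ).1 hΘχ₂
  obtain ⟨j₁, hj₁⟩ := (charInner_ne_zero_iff (character_comp_inclusion_eq hX₁χ) hW).1 hχ₁ψ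
  obtain ⟨j₂, hj₂⟩ := (charInner_ne_zero_iff (character_comp_inclusion_eq hX₂χ) hW).1 hχ₂ψ
  have hrank := (charInner_eq_one_iff (character_comp_inclusion_eq hV) hW).1 hΘψ
  obtain ⟨e⟩ := nonempty_equiv_of_finrank_intertwiningMap_eq_one hrank hi₁ hj₁ hi₂ hj₂
  funext g
  calc χ₁ g = X₁.character ⟨g, trivial⟩ := hX₁χ ⟨g, trivial⟩
    _ = X₂.character ⟨g, trivial⟩ := congrFun (char_iso e) _
    _ = χ₂ g := (hX₂χ ⟨g, trivial⟩).symm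

theorem existsUnique_constituent_of_charInner_eq_one (hΘ : IsCharOn ⊤ Θ) (hψ : IsCharOn M ψ)
    (hΘψ : charInner M Θ ψ = 1) :
    ∃! χ : G → ℂ, IsIrredCharOn ⊤ χ ∧ charInner ⊤ Θ χ ≠ 0 ∧ charInner M χ ψ ≠ 0 := by
  refine existsUnique_of_exists_of_unique
    (exists_constituent_of_charInner_eq_one hΘ hψ hΘψ) ?_
  rintro χ₁ χ₂ ⟨hχ₁, hΘχ₁, hχ₁ψ⟩ ⟨hχ₂, hΘχ₂, hχ₂ψ⟩
  exact constituent_unique_of_charInner_eq_one hΘ hψ hΘψ hχ₁ hΘχ₁ hχ₁ψ hχ₂ hΘχ₂ hχ₂ψ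

theorem eqOn_of_charInner_eq_one [M.Normal] (hχ : IsIrredCharOn ⊤ χ) (hψ : IsIrredCharOn M ψ)
    (hψ_inv : ∀ g x : G, x ∈ M → ψ (g⁻¹ * x * g) = ψ x) (hχψ : charInner M χ ψ = 1) :
    Set.EqOn χ ψ M := by
  obtain ⟨X, hX, hXχ⟩ := hχ
  obtain ⟨W, hW, hWψ⟩ := hψ
  have := (simple_iff_isIrreducible X).1 hX
  have := (simple_iff_isIrreducible W).1 hW
  let ι : M →* (⊤ : Subgroup G) := Subgroup.inclusion le_top
  let c (g : (⊤ : Subgroup G)) : M →* M := (MulAut.conjNormal (g : G)⁻¹).toMonoidHom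
  have hc (g) (m : M) : ι (c g m) = g⁻¹ * ι m * g := by
    ext
    simp [c, ι]
  have hW_inv (g) : Nonempty (Representation.Equiv W.ρ (W.ρ.comp (c g))) := by
    refine nonempty_equiv_of_character_eq (funext fun m ↦ ?_)
    change W.character (c g m) = W.character m
    rw [← hWψ, ← hWψ, ← hψ_inv g m m.2]
    simp [c]
  obtain ⟨e⟩ := nonempty_equiv_comp_of_finrank_intertwiningMap_eq_one hc hW_inv
    ((charInner_eq_one_iff (character_comp_inclusion_eq hXχ) hWψ).1 hχψ)
  intro m hm
  rw [hWψ ⟨m, hm⟩, character_comp_inclusion_eq hXχ ⟨m, hm⟩]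
  exact (congrFun (char_iso e) ⟨m, hm⟩).symm

end Constituents

theorem stmt_18_general {G : Type} [Group G] [Finite G] (M : Subgroup G) (ψ Θ : G → ℂ)
    (hψ : IsIrredCharOn M ψ) (hΘ : IsCharOn ⊤ Θ) (hΘψ : charInner M Θ ψ = 1) :
    (∃! ψhat : G → ℂ, IsIrredCharOn ⊤ ψhat ∧ charInner ⊤ Θ ψhat ≠ 0 ∧
        charInner M ψhat ψ ≠ 0) ∧
    (M.Normal → (∀ g x : G, x ∈ M → ψ (g⁻¹ * x * g) = ψ x) →
      ∀ ψhat : G → ℂ, IsIrredCharOn ⊤ ψhat → charInner ⊤ Θ ψhat ≠ 0 →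
        charInner M ψhat ψ ≠ 0 → ∀ m : G, m ∈ M → ψhat m = ψ m) := by
  have hψ_char : IsCharOn M ψ := hψ.imp fun _ hW ↦ hW.2
  refine ⟨existsUnique_constituent_of_charInner_eq_one hΘ hψ_char hΘψ, ?_⟩
  intro _ hψ_inv ψhat hψhat hΘψhat hψhatψ
  exact eqOn_of_charInner_eq_one hψhat hψ hψ_inv
    (charInner_eq_one_of_constituent hΘ hψhat hψ_char hΘψ hΘψhat hψhatψ)

/-- Let `M ⊴ G` with `G/M` cyclic, `θ` a multiplicity-free character of `M`,
`ψ` a `G`-invariant irreducible constituent of `θ`, and `Θ` a character of `G`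
with `Θ|_M = θ`.  Then `Θ` has a unique irreducible constituent `ψ̂` whose
restriction to `M` contains `ψ`, and every such constituent extends `ψ`. -/
theorem stmt_18 {G : Type} [Group G] [Fintype G] (M : Subgroup G) [M.Normal]
    (hcyc : IsCyclic (G ⧸ M))
    (θ ψ Θ : G → ℂ)
    (hθ : IsCharOn M θ)
    (hmultfree : ∀ χ : G → ℂ, IsIrredCharOn M χ →
      charInner M θ χ = 0 ∨ charInner M θ χ = 1)
    (hψ : IsIrredCharOn M ψ)
    (hψθ : charInner M θ ψ ≠ 0)
    (hψinv : ∀ g x : G, x ∈ M → ψ (g⁻¹ * x * g) = ψ x)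
    (hΘ : IsCharOn ⊤ Θ)
    (hΘθ : ∀ m : G, m ∈ M → Θ m = θ m) :
    (∃! ψhat : G → ℂ, IsIrredCharOn ⊤ ψhat ∧ charInner ⊤ Θ ψhat ≠ 0 ∧
        charInner M ψhat ψ ≠ 0) ∧
    (∀ ψhat : G → ℂ, IsIrredCharOn ⊤ ψhat → charInner ⊤ Θ ψhat ≠ 0 →
        charInner M ψhat ψ ≠ 0 → ∀ m : G, m ∈ M → ψhat m = ψ m) := by
  have hmult : charInner M Θ ψ = 1 :=
    (charInner_congr hΘθ).trans ((hmultfree ψ hψ).resolve_left hψθ)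
  have hgeneral := stmt_18_general M ψ Θ hψ hΘ hmult
  exact ⟨hgeneral.1, hgeneral.2 ‹M.Normal› hψinv⟩
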